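/- arXiv:2509.06785 — 4 statements merged into one kernel-verified Lean document; each statement's English description precedes it below -/
import Mathlib

section
/- Equip ℤ^7 with the symmetric bilinear form B(u, v) = u₁v₁ − u₂v₂ − ⋯ − u₇v₇, let H = (3, −1, −1, −1, −1, −1, −1), and let S = {L ∈ ℤ^7 : B(L, L) = −1, B(L, H) = 1} (a set of 27 elements). If M : ℤ^7 → ℤ^7 is a ℤ-linear automorphism satisfying B(Mu, Mv) = B(u, v) for all u, v and M(H) = H, then M maps S bijectively onto S. Moreover, M is uniquely determined by the induced permutation of S: if M and M' are two such automorphisms with M(L) = M'(L) for every L ∈ S, then M = M'. -/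
noncomputable section

/-- The unimodular bilinear form of signature `(1,6)` on `ℤ^7`, given by the diagonal
matrix `diag(1, -1, -1, -1, -1, -1, -1)`. -/
def cubicForm (u v : Fin 7 → ℤ) : ℤ :=
  u 0 * v 0 - u 1 * v 1 - u 2 * v 2 - u 3 * v 3 - u 4 * v 4 - u 5 * v 5 - u 6 * v 6

/-- The hyperplane class `H = (3, -1, -1, -1, -1, -1, -1)`. -/
def hypClass : Fin 7 → ℤ := ![3, -1, -1, -1, -1, -1, -1]

/-- The set of homology classes of the 27 lines: `L² = -1` and `L·H = 1`. -/
def lineClasses : Set (Fin 7 → ℤ) :=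
  {L | cubicForm L L = -1 ∧ cubicForm L hypClass = 1}

/-!
The line classes are cut out by the form and the hyperplane class, so a bijection preserving both
permutes them. Regard `ℤ^7` as the Picard lattice of the plane blown up at six points, with `e₀` the
pullback of a line and `eᵢ` the exceptional classes. The six `eᵢ` are line classes, and so is the
strict transform `e₀ - e₁ - e₂` of the line through two of the points; hence `e₀` is a sum of line
classes, the line classes span `ℤ^7`, and a linear map is determined by its values on them.
-/

theorem bijOn_setOf_form_eq {V W R : Type*} {B : V → V → R} {B' : W → W → R} {h : V} {h' : W}
    (e : V ≃ W) (hB : ∀ u v, B' (e u) (e v) = B u v) (hh : e h = h') (a b : R) :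
    Set.BijOn e {v | B v v = a ∧ B v h = b} {w | B' w w = a ∧ B' w h' = b} :=
  e.bijOn fun v => by simp only [Set.mem_ofPred_eq, ← hh, hB]

theorem single_succ_mem_lineClasses (i : Fin 6) : Pi.single i.succ 1 ∈ lineClasses := by
  constructor <;> decide +revert

theorem single_zero_sub_single_sub_single_mem_lineClasses {i j : Fin 6} (hij : i ≠ j) :
    Pi.single 0 1 - Pi.single i.succ 1 - Pi.single j.succ 1 ∈ lineClasses := by
  constructor <;> decide +revert

theorem single_zero_mem_span_lineClasses : Pi.single 0 1 ∈ Submodule.span ℤ lineClasses := by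
  have hline : _ ∈ Submodule.span ℤ lineClasses := Submodule.subset_span
    (single_zero_sub_single_sub_single_mem_lineClasses (zero_ne_one : (0 : Fin 6) ≠ 1))
  have hexc (i : Fin 6) : Pi.single i.succ 1 ∈ Submodule.span ℤ lineClasses :=
    Submodule.subset_span (single_succ_mem_lineClasses i)
  rwa [Submodule.sub_mem_iff_left _ (hexc 1), Submodule.sub_mem_iff_left _ (hexc 0)] at hline

theorem span_lineClasses : Submodule.span ℤ lineClasses = ⊤ := by
  rw [eq_top_iff, ← (Pi.basisFun ℤ (Fin 7)).span_eq, Submodule.span_le]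
  rintro _ ⟨i, rfl⟩
  rw [Pi.basisFun_apply]
  cases i using Fin.cases with
  | zero => exact single_zero_mem_span_lineClasses
  | succ i => exact Submodule.subset_span (single_succ_mem_lineClasses i)

theorem monodromy_permutes_lines_and_is_determined_by_permutation_general :
    (∀ M : (Fin 7 → ℤ) ≃ (Fin 7 → ℤ),
      (∀ u v, cubicForm (M u) (M v) = cubicForm u v) → M hypClass = hypClass →
      Set.BijOn M lineClasses lineClasses) ∧
    (∀ {A : Type*} [AddCommGroup A] (f g : (Fin 7 → ℤ) →ₗ[ℤ] A),
      Set.EqOn f g lineClasses → f = g) :=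
  ⟨fun M hB hH => bijOn_setOf_form_eq M hB hH (-1) 1,
    fun _ _ hfg => LinearMap.ext_on span_lineClasses hfg⟩

/-- Any `ℤ`-linear automorphism of `ℤ^7` preserving the intersection form and the hyperplane
class permutes the set of 27 line classes, and is uniquely determined by the induced
permutation of the line classes. -/
theorem monodromy_permutes_lines_and_is_determined_by_permutation :
    (∀ M : (Fin 7 → ℤ) ≃ₗ[ℤ] (Fin 7 → ℤ),
      (∀ u v, cubicForm (M u) (M v) = cubicForm u v) → M hypClass = hypClass →
      Set.BijOn M lineClasses lineClasses) ∧
    (∀ M M' : (Fin 7 → ℤ) ≃ₗ[ℤ] (Fin 7 → ℤ),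
      (∀ u v, cubicForm (M u) (M v) = cubicForm u v) → M hypClass = hypClass →
      (∀ u v, cubicForm (M' u) (M' v) = cubicForm u v) → M' hypClass = hypClass →
      (∀ L ∈ lineClasses, M L = M' L) → M = M') :=
  ⟨fun M => monodromy_permutes_lines_and_is_determined_by_permutation_general.{0}.1 M.toEquiv,
    fun M M' _ _ _ _ h => LinearEquiv.toLinearMap_injective <|
      monodromy_permutes_lines_and_is_determined_by_permutation_general.2 M.toLinearMap M' h⟩
end
end

section
/- The Clebsch cubic surface is smooth: for the polynomial f₀ = x₀³ + x₁³ + x₂³ + x₃³ − (x₀ + x₁ + x₂ + x₃)³ in ℂ[x₀, x₁, x₂, x₃], there is no point (x₀, x₁, x₂, x₃) ∈ ℂ⁴ ∖ {0} at which all four partial derivatives ∂f₀/∂x₀, ∂f₀/∂x₁, ∂f₀/∂x₂, ∂f₀/∂x₃ vanish simultaneously. -/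
open MvPolynomial

noncomputable section

/-- The defining polynomial of the Clebsch cubic surface:
`f₀ = x₀³ + x₁³ + x₂³ + x₃³ - (x₀ + x₁ + x₂ + x₃)³`. -/
def clebsch : MvPolynomial (Fin 4) ℂ :=
  X 0 ^ 3 + X 1 ^ 3 + X 2 ^ 3 + X 3 ^ 3 - (X 0 + X 1 + X 2 + X 3) ^ 3

/-!
At a common zero of the partial derivatives every coordinate satisfies `xᵢ² = s²`, where `s` is the
sum of the coordinates. Hence `xᵢ = ±s`, and summing gives `s = k s` for a sum `k` of signs. When
the number of coordinates is even so is `k`, and `k - 1` is odd; if odd integers of that size do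
not vanish in the coefficient ring, then `s = 0` and all coordinates vanish.
-/

/-- The equation of the Clebsch hypersurface in variables indexed by `σ`, the generalization of the
Clebsch cubic surface obtained by eliminating `y` from `y + ∑ xᵢ = 0`, `y³ + ∑ xᵢ³ = 0`. -/
def clebschCubic (σ R : Type*) [Fintype σ] [CommRing R] : MvPolynomial σ R :=
  ∑ i, X i ^ 3 - (∑ i, X i) ^ 3

theorem clebsch_eq_clebschCubic : clebsch = clebschCubic (Fin 4) ℂ := by
  simp only [clebsch, clebschCubic, Fin.sum_univ_four]

section

variable {σ R : Type*} [CommRing R]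

theorem eval_pderiv_clebschCubic [Fintype σ] (x : σ → R) (i : σ) :
    eval x (pderiv i (clebschCubic σ R)) = 3 * (x i ^ 2 - (∑ j, x j) ^ 2) := by
  classical
  simp [clebschCubic, pderiv_X, Pi.single_apply, mul_sub]

variable [NoZeroDivisors R]

theorem exists_int_sum_eq_mul_of_sq_eq_sq (t : Finset σ) {x : σ → R} {s : R}
    (hx : ∀ i ∈ t, x i ^ 2 = s ^ 2) :
    ∃ k : ℤ, |k| ≤ t.card ∧ (Even k ↔ Even t.card) ∧ ∑ i ∈ t, x i = k * s := by
  classical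
  induction t using Finset.induction_on with
  | empty => exact ⟨0, by simp⟩
  | insert a t ha ih =>
    obtain ⟨k, hk_le, hk_even, hk_sum⟩ := ih fun i hi ↦ hx i (Finset.mem_insert_of_mem hi)
    rw [Finset.sum_insert ha, Finset.card_insert_of_notMem ha, hk_sum]
    rcases sq_eq_sq_iff_eq_or_eq_neg.mp (hx a (Finset.mem_insert_self a t)) with hpos | hneg
    · refine ⟨k + 1, by grind, by grind, ?_⟩
      rw [hpos]
      push_cast
      ring
    · refine ⟨k - 1, by grind, by grind, ?_⟩
      rw [hneg]
      push_cast
      ring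

variable [Fintype σ]

theorem sum_eq_zero_of_forall_sq_eq_sq_sum (hσ : Even (Fintype.card σ))
    (hchar : ∀ m : ℕ, Odd m → m ≤ Fintype.card σ + 1 → (m : R) ≠ 0) {x : σ → R}
    (hx : ∀ i, x i ^ 2 = (∑ j, x j) ^ 2) : ∑ j, x j = 0 := by
  obtain ⟨k, hk_le, hk_even, hk_sum⟩ :=
    exists_int_sum_eq_mul_of_sq_eq_sq Finset.univ fun i _ ↦ hx i
  rw [Finset.card_univ] at hk_le hk_even
  have hk_odd : Odd (k - 1).natAbs := Int.natAbs_odd.mpr ((hk_even.mpr hσ).sub_odd odd_one)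
  have hk_ne : ((k - 1).natAbs : R) ≠ 0 := hchar _ hk_odd (by grind)
  have hk_mul : ((k - 1 : ℤ) : R) * ∑ j, x j = 0 := by
    push_cast
    linear_combination -hk_sum
  refine (mul_eq_zero.mp hk_mul).resolve_left fun hk_zero ↦ hk_ne ?_
  rcases Int.natAbs_eq (k - 1) with h | h <;> rw [h] at hk_zero <;> simpa using hk_zero

theorem clebsch_is_smooth_general (hσ : Even (Fintype.card σ))
    (hchar : ∀ m : ℕ, Odd m → m ≤ Fintype.card σ + 1 → (m : R) ≠ 0) :
    ¬ ∃ x : σ → R, x ≠ 0 ∧ ∀ i, eval x (pderiv i (clebschCubic σ R)) = 0 := by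
  rintro ⟨x, hx_ne, hx⟩
  obtain ⟨i₀, -⟩ := Function.ne_iff.mp hx_ne
  have hcard : 0 < Fintype.card σ := Fintype.card_pos_iff.mpr ⟨i₀⟩
  have hthree : (3 : R) ≠ 0 := mod_cast hchar 3 (by decide) (by grind)
  have hsq (i : σ) : x i ^ 2 = (∑ j, x j) ^ 2 := by
    have hi := hx i
    rw [eval_pderiv_clebschCubic] at hi
    exact sub_eq_zero.mp ((mul_eq_zero.mp hi).resolve_left hthree)
  have hsum : ∑ j, x j = 0 := sum_eq_zero_of_forall_sq_eq_sq_sum hσ hchar hsq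
  refine hx_ne (funext fun i ↦ eq_zero_of_pow_eq_zero (n := 2) ?_)
  rw [hsq i, hsum, zero_pow two_ne_zero]

end

/-- The Clebsch cubic surface is smooth: the four partial derivatives of `f₀` have no
common zero in `ℂ⁴ ∖ {0}`. -/
theorem clebsch_is_smooth :
    ¬ ∃ x : Fin 4 → ℂ, x ≠ 0 ∧ ∀ i : Fin 4, eval x (pderiv i clebsch) = 0 := by
  rw [clebsch_eq_clebschCubic]
  exact clebsch_is_smooth_general (by decide) fun m hm _ ↦ Nat.cast_ne_zero.mpr hm.pos.ne'
end
end

section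
/- Let S₅ act on homogeneous cubic forms in ℂ[x₀, x₁, x₂, x₃] through the pentahedral action: a permutation σ of the five linear forms ℓ₀ = x₀, ℓ₁ = x₁, ℓ₂ = x₂, ℓ₃ = x₃, ℓ₄ = −(x₀ + x₁ + x₂ + x₃) acts on a cubic form by the corresponding linear substitution of variables (the unique linear change of the xᵢ sending ℓᵢ to ℓ_{σ(i)} for all i). Then the subspace of degree-3 forms invariant under every element of S₅ is one-dimensional, spanned by f₀ = x₀³ + x₁³ + x₂³ + x₃³ − (x₀ + x₁ + x₂ + x₃)³. -/
open MvPolynomial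

noncomputable section

/-- The five linear forms of the pentahedron: `ℓ₀ = x₀, ℓ₁ = x₁, ℓ₂ = x₂, ℓ₃ = x₃,`
`ℓ₄ = -(x₀ + x₁ + x₂ + x₃)`; they satisfy `ℓ₀ + ℓ₁ + ℓ₂ + ℓ₃ + ℓ₄ = 0`. -/
def pentForm : Fin 5 → MvPolynomial (Fin 4) ℂ :=
  ![X 0, X 1, X 2, X 3, -(X 0 + X 1 + X 2 + X 3)]

/-- The pentahedral action of a permutation `σ ∈ S₅` on polynomials in `x₀, …, x₃`:
the linear substitution of the variables sending `ℓᵢ` to `ℓ_{σ(i)}` for all `i`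
(it suffices to substitute `xᵢ = ℓᵢ ↦ ℓ_{σ(i)}` for `i = 0, …, 3`; then automatically
`ℓ₄ ↦ ℓ_{σ(4)}` since the five forms sum to zero). -/
def pentAct (σ : Equiv.Perm (Fin 5)) :
    MvPolynomial (Fin 4) ℂ →ₐ[ℂ] MvPolynomial (Fin 4) ℂ :=
  aeval fun i : Fin 4 => pentForm (σ i.castSucc)

/-!
Let `Sₙ₊₁` permute `n + 1` linear forms `ℓᵢ` in `n` variables with `∑ ℓᵢ = 0`; the pentahedron is
the case `n = 4`. An invariant cubic `f` satisfies `(n + 1)! • f = ∑ σ, σ f`, and `f` is a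
combination of products `ℓᵢ ℓⱼ ℓₖ`, so it is enough to see that every sum
`T(i, j, k) = ∑ σ, ℓ_{σ i} ℓ_{σ j} ℓ_{σ k}` is a multiple of `∑ ℓᵢ³`. By symmetry `T(i, j, k)`
depends only on which of the indices coincide, and `∑ₖ T(i, j, k) = 0` because `∑ ℓₖ = 0`; this
relation expresses the sums with two and then three distinct indices through `T(i, i, i)`.
-/

lemma isUnit_natCast_of_isUnit_factorial {R : Type*} [CommSemiring R] {m n : ℕ}
    (hn : IsUnit (n.factorial : R)) (hm : 0 < m) (hmn : m ≤ n) : IsUnit (m : R) :=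
  isUnit_of_dvd_unit (Nat.cast_dvd_cast (Nat.dvd_factorial hm hmn)) hn

section PermTripleSum

variable {ι R A : Type*} [Fintype ι] [DecidableEq ι]

section Semiring

variable [CommSemiring R] [CommSemiring A] [Algebra R A]

/-- The sum over all permutations of the index set of the translates of the cubic monomial
`aᵢ aⱼ aₖ`; the indices may coincide. -/
def permTripleSum (a : ι → A) (i j k : ι) : A :=
  ∑ σ : Equiv.Perm ι, a (σ i) * a (σ j) * a (σ k)

lemma permTripleSum_comm_left (a : ι → A) (i j k : ι) :
    permTripleSum a i j k = permTripleSum a j i k :=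
  Finset.sum_congr rfl fun σ _ => by rw [mul_comm (a (σ i))]

lemma permTripleSum_comm_right (a : ι → A) (i j k : ι) :
    permTripleSum a i j k = permTripleSum a i k j := by
  simp only [permTripleSum, mul_right_comm]

lemma permTripleSum_apply_perm (a : ι → A) (τ : Equiv.Perm ι) (i j k : ι) :
    permTripleSum a (τ i) (τ j) (τ k) = permTripleSum a i j k :=
  Equiv.sum_comp (Equiv.mulRight τ) fun σ => a (σ i) * a (σ j) * a (σ k)

lemma sum_permTripleSum_eq_zero {a : ι → A} (ha : ∑ i, a i = 0) (i j : ι) :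
    ∑ k, permTripleSum a i j k = 0 := by
  have sum_translate (σ : Equiv.Perm ι) : ∑ k, a (σ k) = 0 := (Equiv.sum_comp σ a).trans ha
  simp only [permTripleSum]
  rw [Finset.sum_comm]
  simp only [← Finset.mul_sum, sum_translate, mul_zero, Finset.sum_const_zero]

lemma sum_permTripleSum_self (a : ι → A) :
    ∑ i, permTripleSum a i i i = (Fintype.card ι).factorial • ∑ i, a i ^ 3 := by
  simp only [permTripleSum, ← pow_three']
  rw [Finset.sum_comm, ← Fintype.card_perm]
  exact Finset.sum_eq_card_nsmul fun σ _ => Equiv.sum_comp σ fun i => a i ^ 3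

lemma card_nsmul_permTripleSum_self (a : ι → A) (i : ι) :
    Fintype.card ι • permTripleSum a i i i = (Fintype.card ι).factorial • ∑ i, a i ^ 3 := by
  rw [← sum_permTripleSum_self, Fintype.card]
  refine (Finset.sum_eq_card_nsmul fun j _ => ?_).symm
  simpa only [Equiv.swap_apply_left] using permTripleSum_apply_perm a (Equiv.swap i j) i i i

lemma permTripleSum_self_mem_span (hι : IsUnit ((Fintype.card ι).factorial : R)) (a : ι → A)
    (i : ι) : permTripleSum a i i i ∈ R ∙ ∑ i, a i ^ 3 := by
  have card_isUnit : IsUnit (Fintype.card ι : R) :=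
    isUnit_natCast_of_isUnit_factorial hι (Fintype.card_pos_iff.mpr ⟨i⟩) le_rfl
  rw [← Submodule.smul_mem_iff_of_isUnit _ card_isUnit, Nat.cast_smul_eq_nsmul,
    card_nsmul_permTripleSum_self]
  exact nsmul_mem (Submodule.mem_span_singleton_self _) _

end Semiring

variable [CommRing R] [CommRing A] [Algebra R A]

lemma card_compl_nsmul_permTripleSum {a : ι → A} (ha : ∑ i, a i = 0) {i j k : ι}
    (hk : k ∉ ({i, j} : Finset ι)) :
    ({i, j} : Finset ι)ᶜ.card • permTripleSum a i j k = -∑ l ∈ {i, j}, permTripleSum a i j l := by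
  have eq_of_notMem (l : ι) (hl : l ∈ ({i, j} : Finset ι)ᶜ) :
      permTripleSum a i j l = permTripleSum a i j k := by
    simp only [Finset.mem_compl, Finset.mem_insert, Finset.mem_singleton, not_or] at hk hl
    have h := permTripleSum_apply_perm a (Equiv.swap k l) i j k
    rwa [Equiv.swap_apply_of_ne_of_ne (Ne.symm hk.1) (Ne.symm hl.1),
      Equiv.swap_apply_of_ne_of_ne (Ne.symm hk.2) (Ne.symm hl.2), Equiv.swap_apply_left] at h
  rw [← Finset.sum_eq_card_nsmul eq_of_notMem, eq_neg_iff_add_eq_zero, Finset.sum_compl_add_sum,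
    sum_permTripleSum_eq_zero ha]

lemma permTripleSum_mem_of_forall_mem (hι : IsUnit ((Fintype.card ι).factorial : R)) {a : ι → A}
    (ha : ∑ i, a i = 0) {S : Submodule R A} {i j k : ι} (hk : k ∉ ({i, j} : Finset ι))
    (hS : ∀ l ∈ ({i, j} : Finset ι), permTripleSum a i j l ∈ S) : permTripleSum a i j k ∈ S := by
  have card_isUnit : IsUnit (({i, j} : Finset ι)ᶜ.card : R) :=
    isUnit_natCast_of_isUnit_factorial hι (Finset.card_pos.mpr ⟨k, Finset.mem_compl.mpr hk⟩)
      (Finset.card_le_univ _)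
  rw [← S.smul_mem_iff_of_isUnit card_isUnit, Nat.cast_smul_eq_nsmul,
    card_compl_nsmul_permTripleSum ha hk]
  exact neg_mem (sum_mem hS)

theorem permTripleSum_mem_span (hι : IsUnit ((Fintype.card ι).factorial : R)) {a : ι → A}
    (ha : ∑ i, a i = 0) (i j k : ι) : permTripleSum a i j k ∈ R ∙ ∑ i, a i ^ 3 := by
  have two_equal (i k : ι) : permTripleSum a i i k ∈ R ∙ ∑ i, a i ^ 3 := by
    by_cases hk : k = i
    · exact hk ▸ permTripleSum_self_mem_span hι a k
    · refine permTripleSum_mem_of_forall_mem hι ha (by simpa using hk) fun l hl => ?_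
      obtain rfl : l = i := by simpa using hl
      exact permTripleSum_self_mem_span hι a l
  have last_mem_pair (l : ι) (hl : l ∈ ({i, j} : Finset ι)) :
      permTripleSum a i j l ∈ R ∙ ∑ i, a i ^ 3 := by
    obtain rfl | rfl : l = i ∨ l = j := by simpa using hl
    · exact permTripleSum_comm_right a l l j ▸ two_equal l j
    · rw [permTripleSum_comm_left, permTripleSum_comm_right]
      exact two_equal l i
  by_cases hk : k ∈ ({i, j} : Finset ι)
  · exact last_mem_pair k hk
  · exact permTripleSum_mem_of_forall_mem hι ha hk last_mem_pair

end PermTripleSum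

lemma homogeneousSubmodule_three_le {ι R : Type*} [CommSemiring R]
    {S : Submodule R (MvPolynomial ι R)} (hS : ∀ i j k, X i * X j * X k ∈ S) :
    homogeneousSubmodule ι R 3 ≤ S := by
  rw [← homogeneousSubmodule_one_pow, homogeneousSubmodule_one_eq_span_X, pow_three',
    Submodule.span_mul_span, Submodule.span_mul_span, Submodule.span_le]
  rintro _ ⟨_, ⟨_, ⟨i, rfl⟩, _, ⟨j, rfl⟩, rfl⟩, _, ⟨k, rfl⟩, rfl⟩
  exact hS i j k

section Simplex

variable {n : ℕ} {R : Type*} [CommRing R]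

/-- The coordinates `x₀, …, xₙ₋₁` followed by `-(x₀ + ⋯ + xₙ₋₁)`: the `n + 1` linear forms in `n`
variables generalising the pentahedron `pentForm`. -/
def simplexForm : Fin (n + 1) → MvPolynomial (Fin n) R :=
  Fin.snoc X (-∑ i, X i)

/-- The substitution of variables sending the `i`-th form `simplexForm i` to `simplexForm (σ i)`,
generalising `pentAct`. As there, prescribing it on the first `n` forms, the variables, is
enough. -/
def simplexAct (σ : Equiv.Perm (Fin (n + 1))) :
    MvPolynomial (Fin n) R →ₐ[R] MvPolynomial (Fin n) R :=
  aeval fun i : Fin n => simplexForm (σ i.castSucc)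

variable (n R) in
/-- The sum of the cubes of the forms `simplexForm`, generalising the Clebsch cubic. -/
def simplexCubic : MvPolynomial (Fin n) R :=
  ∑ i, simplexForm i ^ 3

@[simp]
lemma simplexForm_castSucc (i : Fin n) : simplexForm (R := R) i.castSucc = X i :=
  Fin.snoc_castSucc (α := fun _ => MvPolynomial (Fin n) R) _ _ i

@[simp]
lemma simplexForm_last : simplexForm (R := R) (Fin.last n) = -∑ i, X i :=
  Fin.snoc_last (α := fun _ => MvPolynomial (Fin n) R) _ _

lemma sum_simplexForm : ∑ i, simplexForm (n := n) (R := R) i = 0 := by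
  simp [Fin.sum_univ_castSucc]

lemma simplexCubic_eq : simplexCubic n R = ∑ i, X i ^ 3 - (∑ i, X i) ^ 3 := by
  simp [simplexCubic, Fin.sum_univ_castSucc, Odd.neg_pow (n := 3) (by decide), sub_eq_add_neg]

lemma simplexAct_X (σ : Equiv.Perm (Fin (n + 1))) (i : Fin n) :
    simplexAct (R := R) σ (X i) = simplexForm (σ i.castSucc) :=
  aeval_X _ i

lemma simplexAct_simplexForm (σ : Equiv.Perm (Fin (n + 1))) (i : Fin (n + 1)) :
    simplexAct (R := R) σ (simplexForm i) = simplexForm (σ i) := by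
  induction i using Fin.lastCases with
  | cast i => rw [simplexForm_castSucc, simplexAct_X]
  | last =>
    have sum_translate := (Equiv.sum_comp σ _).trans (sum_simplexForm (n := n) (R := R))
    rw [Fin.sum_univ_castSucc] at sum_translate
    simp only [simplexForm_last, map_neg, map_sum, simplexAct_X]
    exact neg_eq_of_add_eq_zero_right sum_translate

lemma simplexAct_simplexCubic (σ : Equiv.Perm (Fin (n + 1))) :
    simplexAct σ (simplexCubic n R) = simplexCubic n R := by
  simp only [simplexCubic, map_sum, map_pow, simplexAct_simplexForm]
  exact Equiv.sum_comp σ fun i => simplexForm i ^ 3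

lemma isHomogeneous_simplexCubic : (simplexCubic n R).IsHomogeneous 3 := by
  rw [simplexCubic_eq]
  exact (IsHomogeneous.sum _ _ 3 fun i _ => isHomogeneous_X_pow i 3).sub
    ((IsHomogeneous.sum _ _ 1 fun i _ => isHomogeneous_X R i).pow 3)

lemma simplexCubic_ne_zero (hn : 2 ≤ n) (h6 : (6 : R) ≠ 0) : simplexCubic n R ≠ 0 := by
  have : Nontrivial (Fin n) := Fin.nontrivial_iff_two_le.mpr hn
  obtain ⟨i, j, hij⟩ := exists_pair_ne (Fin n)
  have eval_pair : eval (fun k => if k ∈ ({i, j} : Finset (Fin n)) then 1 else 0)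
      (simplexCubic n R) = -6 := by
    simp only [simplexCubic_eq, map_sub, map_sum, map_pow, eval_X, ite_pow, one_pow,
      zero_pow three_ne_zero, Finset.sum_boole, Finset.filter_univ_mem, Finset.card_pair hij]
    norm_num
  intro h
  rw [h, map_zero] at eval_pair
  exact h6 (neg_eq_zero.mp eval_pair.symm)

lemma sum_simplexAct_mem_span (h : IsUnit ((n + 1).factorial : R)) {f : MvPolynomial (Fin n) R}
    (hf : f.IsHomogeneous 3) :
    ∑ σ : Equiv.Perm (Fin (n + 1)), simplexAct σ f ∈ R ∙ simplexCubic n R := by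
  let symmetrize : MvPolynomial (Fin n) R →ₗ[R] MvPolynomial (Fin n) R :=
    ∑ σ : Equiv.Perm (Fin (n + 1)), (simplexAct σ).toLinearMap
  have symmetrize_apply (g : MvPolynomial (Fin n) R) : symmetrize g = ∑ σ, simplexAct σ g := by
    simp only [symmetrize, LinearMap.sum_apply, AlgHom.toLinearMap_apply]
  suffices homogeneousSubmodule (Fin n) R 3 ≤ (R ∙ simplexCubic n R).comap symmetrize from
    symmetrize_apply f ▸ this hf
  refine homogeneousSubmodule_three_le fun i j k => ?_
  rw [Submodule.mem_comap, symmetrize_apply]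
  simp only [map_mul, simplexAct_X]
  exact permTripleSum_mem_span (by rwa [Fintype.card_fin]) sum_simplexForm
    i.castSucc j.castSucc k.castSucc

lemma mem_span_simplexCubic_of_invariant (h : IsUnit ((n + 1).factorial : R))
    {f : MvPolynomial (Fin n) R} (hf : f.IsHomogeneous 3)
    (hinv : ∀ σ : Equiv.Perm (Fin (n + 1)), simplexAct σ f = f) : f ∈ R ∙ simplexCubic n R := by
  have sum_eq : ∑ σ : Equiv.Perm (Fin (n + 1)), simplexAct σ f = ((n + 1).factorial : R) • f := by
    simp [hinv, Fintype.card_perm, Nat.cast_smul_eq_nsmul]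
  rw [← Submodule.smul_mem_iff_of_isUnit _ h, ← sum_eq]
  exact sum_simplexAct_mem_span h hf

theorem S5_invariant_cubics_eq_span_clebsch_general [Nontrivial R] (hn : 2 ≤ n)
    (h : IsUnit ((n + 1).factorial : R)) :
    simplexCubic n R ≠ 0 ∧
    {f : MvPolynomial (Fin n) R | f.IsHomogeneous 3 ∧
        ∀ σ : Equiv.Perm (Fin (n + 1)), simplexAct σ f = f} =
      Set.range fun c : R => c • simplexCubic n R := by
  have six_isUnit : IsUnit ((Nat.factorial 3 : ℕ) : R) :=
    isUnit_of_dvd_unit (Nat.cast_dvd_cast (Nat.factorial_dvd_factorial (by lia))) h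
  refine ⟨simplexCubic_ne_zero hn (by simpa [Nat.factorial] using six_isUnit.ne_zero), ?_⟩
  ext f
  constructor
  · rintro ⟨hf, hinv⟩
    exact Submodule.mem_span_singleton.mp (mem_span_simplexCubic_of_invariant h hf hinv)
  · rintro ⟨c, rfl⟩
    exact ⟨(homogeneousSubmodule (Fin n) R 3).smul_mem c isHomogeneous_simplexCubic,
      fun σ => by rw [map_smul, simplexAct_simplexCubic]⟩

end Simplex

lemma simplexForm_eq_pentForm : simplexForm = pentForm := by
  ext1 i
  induction i using Fin.lastCases with
  | cast i => rw [simplexForm_castSucc]; fin_cases i <;> rfl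
  | last => rw [simplexForm_last, Fin.sum_univ_four]; rfl

lemma simplexAct_eq_pentAct : simplexAct = pentAct := by
  ext1 σ
  rw [simplexAct, pentAct, simplexForm_eq_pentForm]

lemma simplexCubic_eq_clebsch : simplexCubic 4 ℂ = clebsch := by
  rw [simplexCubic_eq, clebsch, Fin.sum_univ_four, Fin.sum_univ_four]

/-- The space of cubic forms invariant under the pentahedral action of every element of
`S₅` is one-dimensional, spanned by the Clebsch cubic `f₀`. -/
theorem S5_invariant_cubics_eq_span_clebsch :
    clebsch ≠ 0 ∧
    {f : MvPolynomial (Fin 4) ℂ | f.IsHomogeneous 3 ∧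
        ∀ σ : Equiv.Perm (Fin 5), pentAct σ f = f} =
      Set.range fun c : ℂ => c • clebsch := by
  rw [← simplexCubic_eq_clebsch, ← simplexAct_eq_pentAct]
  exact S5_invariant_cubics_eq_span_clebsch_general (by norm_num)
    (isUnit_iff_ne_zero.mpr (Nat.cast_ne_zero.mpr (Nat.factorial_ne_zero _)))
end
end

section
/- A homogeneous cubic polynomial in ℂ[x₀, x₁, x₂, x₃] that is invariant under every even permutation of the four variables x₀, x₁, x₂, x₃ is invariant under every permutation of the variables. Equivalently, the A₄-invariant subspace of degree-3 forms coincides with the S₄-invariant subspace (and in particular has dimension 3). -/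
open MvPolynomial

noncomputable section

/-! A monomial of degree less than `n (n - 1) / 2` in `n` variables has two equal exponents, since
`n` distinct natural numbers sum to at least `0 + 1 + ⋯ + (n - 1)`. The transposition of these two
variables fixes the monomial, so an odd permutation moves it to the same place as some even one:
the orbits of the alternating and of the symmetric group on such monomials coincide. -/

open Equiv Function

theorem card_choose_two_le_sum (s : Finset ℕ) : s.card.choose 2 ≤ ∑ x ∈ s, x := by
  induction s using Finset.induction_on_max with
  | empty => simp
  | insert a s hlt ih =>
    have hcard : s.card ≤ a := by
      simpa using Finset.card_le_card fun x hx ↦ Finset.mem_range.2 (hlt x hx)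
    have ha : a ∉ s := fun h ↦ (hlt a h).false
    rw [Finset.card_insert_of_notMem ha, Finset.sum_insert ha, Nat.choose_succ_succ' _ 1,
      Nat.choose_one_right]
    exact add_le_add hcard ih

theorem card_choose_two_le_sum_of_injective {ι : Type*} [Fintype ι] {d : ι → ℕ}
    (hd : Injective d) : (Fintype.card ι).choose 2 ≤ ∑ i, d i := by
  simpa using card_choose_two_le_sum (Finset.univ.map ⟨d, hd⟩)

theorem mapDomain_swap_eq_self {ι M : Type*} [DecidableEq ι] [AddCommMonoid M] {d : ι →₀ M}
    {i j : ι} (h : d i = d j) : d.mapDomain (swap i j) = d := by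
  ext k
  rw [Finsupp.mapDomain_equiv_apply, symm_swap, apply_swap_eq_self h]

theorem isSymmetric_iff_coeff_mapDomain {ι R : Type*} [CommSemiring R] {f : MvPolynomial ι R} :
    f.IsSymmetric ↔ ∀ (σ : Perm ι) (d : ι →₀ ℕ), f.coeff (d.mapDomain σ) = f.coeff d := by
  refine ⟨fun h σ d ↦ ?_, fun h σ ↦ ?_⟩
  · rw [← coeff_rename_mapDomain σ σ.injective f d, h σ]
  · ext e
    obtain ⟨d, rfl⟩ : ∃ d : ι →₀ ℕ, d.mapDomain σ = e :=
      Finsupp.mapDomain_surjective σ.surjective e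
    rw [coeff_rename_mapDomain σ σ.injective, h σ d]

section

variable {ι : Type*} [Fintype ι] [DecidableEq ι]

theorem mul_swap_mem_alternatingGroup_iff {σ : Perm ι} {i j : ι} (hij : i ≠ j) :
    σ * swap i j ∈ alternatingGroup ι ↔ σ ∉ alternatingGroup ι := by
  rw [Perm.mem_alternatingGroup, Perm.mem_alternatingGroup, Perm.sign_mul, Perm.sign_swap hij,
    mul_neg_one, neg_eq_iff_eq_neg, ← Int.units_ne_iff_eq_neg]

theorem exists_mem_alternatingGroup_mapDomain_eq {M : Type*} [AddCommMonoid M] {d : ι →₀ M}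
    (hd : ¬ Injective d) (σ : Perm ι) :
    ∃ ρ ∈ alternatingGroup ι, d.mapDomain ρ = d.mapDomain σ := by
  by_cases hσ : σ ∈ alternatingGroup ι
  · exact ⟨σ, hσ, rfl⟩
  · obtain ⟨i, j, heq, hij⟩ := not_injective_iff.1 hd
    refine ⟨σ * swap i j, (mul_swap_mem_alternatingGroup_iff hij).2 hσ, ?_⟩
    rw [Perm.coe_mul, Finsupp.mapDomain_comp, mapDomain_swap_eq_self heq]

variable {R : Type*} [CommSemiring R] {f : MvPolynomial ι R}

theorem coeff_mapDomain_of_not_injective (hinv : ∀ σ ∈ alternatingGroup ι, rename σ f = f)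
    {d : ι →₀ ℕ} (hd : ¬ Injective d) (σ : Perm ι) : f.coeff (d.mapDomain σ) = f.coeff d := by
  obtain ⟨ρ, hρ, hρσ⟩ := exists_mem_alternatingGroup_mapDomain_eq hd σ
  calc
    f.coeff (d.mapDomain σ) = (rename ρ f).coeff (d.mapDomain ρ) := by rw [hinv ρ hρ, hρσ]
    _ = f.coeff d := coeff_rename_mapDomain ρ ρ.injective f d

theorem A4_invariant_cubics_are_S4_invariant_general
    (hf : f.totalDegree < (Fintype.card ι).choose 2)
    (hinv : ∀ σ ∈ alternatingGroup ι, rename σ f = f) : f.IsSymmetric := by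
  refine isSymmetric_iff_coeff_mapDomain.2 fun σ d ↦ ?_
  by_cases hd : Injective d
  · have hdeg : f.totalDegree < d.degree := by
      rw [Finsupp.degree_eq_sum]
      exact hf.trans_le (card_choose_two_le_sum_of_injective hd)
    have hdegσ : f.totalDegree < (d.mapDomain σ).degree := by rwa [Finsupp.degree_mapDomain]
    rw [coeff_eq_zero_of_totalDegree_lt hdeg, coeff_eq_zero_of_totalDegree_lt hdegσ]
  · exact coeff_mapDomain_of_not_injective hinv hd σ

end

/-- A homogeneous cubic polynomial in `ℂ[x₀,x₁,x₂,x₃]` that is invariant under every even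
permutation of the four variables is invariant under every permutation of the variables,
i.e. the `A₄`-invariant cubic forms coincide with the `S₄`-invariant ones. -/
theorem A4_invariant_cubics_are_S4_invariant
    (f : MvPolynomial (Fin 4) ℂ) (hf : f.IsHomogeneous 3)
    (hinv : ∀ σ ∈ alternatingGroup (Fin 4), rename σ f = f) :
    ∀ σ : Equiv.Perm (Fin 4), rename σ f = f := by
  exact A4_invariant_cubics_are_S4_invariant_general (hf.totalDegree_le.trans_lt (by decide)) hinv
end
end
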